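/- Let P_Δt(q,·) denote the Markov transition kernel on M of the Metropolized Euler–Maruyama scheme (propose q' = q − Δt∇V(q) + √(2Δt)G with G standard Gaussian on ℝⁿ, accept with probability R_Δt(q,q') and project onto M; stay at q upon rejection), and let P̃_Δt(q,·) denote the kernel of the plain Euler–Maruyama scheme (the proposal is always accepted and projected onto M). Then there exist C ≥ 0 and Δt* > 0 such that for all 0 < Δt ≤ Δt* and all q ∈ M, the total variation distance between the ⌊1/Δt⌋-step laws satisfies ‖P_Δt^{⌊1/Δt⌋}(q,·) − P̃_Δt^{⌊1/Δt⌋}(q,·)‖_TV ≤ C √Δt. -/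

import Mathlib

/-!
The two chains use the same proposals and differ only when the Metropolized one rejects. Up to
sign, the logarithm of the Metropolis ratio is the error of the trapezoidal rule for the line
integral of `∇V` from `q` to `q'` plus `Δt / 4` times the increment of `|∇V|²`: the terms of lower
order cancel. If the first three derivatives of `V` are bounded, as periodicity ensures, it is
therefore `O(|q' - q|³ + Δt |q' - q|)`, and since `q' - q` is `√Δt` times a variable with moments
of every order, a proposal is rejected with probability `O(Δt ^ (3/2))` uniformly in `q`. The
Euler–Maruyama operator does not expand the supremum norm, so the one-step errors add up to `O(√Δt)`
over `⌊1 / Δt⌋` steps.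
-/

open MeasureTheory RealInnerProductSpace

noncomputable section

abbrev En (n : ℕ) := EuclideanSpace ℝ (Fin n)

/-- Gaussian proposal density of the Euler–Maruyama scheme. -/
def Tker {n : ℕ} (V : En n → ℝ) (dt : ℝ) (q q' : En n) : ℝ :=
  (4 * Real.pi * dt) ^ (-(n : ℝ) / 2) *
    Real.exp (-‖q' - q + dt • gradient V q‖ ^ 2 / (4 * dt))

/-- Metropolis acceptance probability. -/
def Rk {n : ℕ} (V : En n → ℝ) (dt : ℝ) (q q' : En n) : ℝ :=
  min 1 (Real.exp (-V q') * Tker V dt q' q / (Real.exp (-V q) * Tker V dt q q'))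

/-- proposal move -/
def propMove {n : ℕ} (V : En n → ℝ) (dt : ℝ) (q g : En n) : En n :=
  q - dt • gradient V q + Real.sqrt (2 * dt) • g

def xi {n : ℕ} (V : En n → ℝ) (q g : En n) : ℝ :=
  -(Real.sqrt 2 / 6) * iteratedFDeriv ℝ 3 V q (fun _ => g) +
    (Real.sqrt 2 / 2) * ⟪gradient V q, fderiv ℝ (gradient V) q g⟫

def xiPlus {n : ℕ} (V : En n → ℝ) (q g : En n) : ℝ := max (xi V q g) 0

/-- standard Gaussian measure on ℝⁿ -/
def gauss (n : ℕ) : Measure (En n) :=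
  volume.withDensity fun g =>
    ENNReal.ofReal ((2 * Real.pi) ^ (-(n : ℝ) / 2) * Real.exp (-‖g‖ ^ 2 / 2))

/-- fundamental domain of the torus -/
def Box (n : ℕ) (L : ℝ) : Set (En n) := {q | ∀ i, q i ∈ Set.Ico (0 : ℝ) L}

/-- integral with respect to the Gibbs measure μ on the torus M -/
def muInt {n : ℕ} (V : En n → ℝ) (L : ℝ) (f : En n → ℝ) : ℝ :=
  (∫ q in Box n L, Real.exp (-V q))⁻¹ * ∫ q in Box n L, f q * Real.exp (-V q)

/-- Laplacian -/
def lap {n : ℕ} (ψ : En n → ℝ) (q : En n) : ℝ :=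
  ∑ i, iteratedFDeriv ℝ 2 ψ q (fun _ => EuclideanSpace.single i (1 : ℝ))

/-- generator of the overdamped Langevin dynamics -/
def gen {n : ℕ} (V ψ : En n → ℝ) (q : En n) : ℝ :=
  -⟪gradient V q, gradient ψ q⟫ + lap ψ q

/-- MALA transition operator on periodic functions -/
def Pmala {n : ℕ} (V : En n → ℝ) (dt : ℝ) (f : En n → ℝ) (q : En n) : ℝ :=
  f q + ∫ q', Rk V dt q q' * Tker V dt q q' * (f q' - f q)

/-- the operator D₁ -/
def D1op {n : ℕ} (V ψ : En n → ℝ) (q : En n) : ℝ :=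
  2 * ∑ i, ∑ j, (iteratedFDeriv ℝ 2 V q ![EuclideanSpace.single i (1:ℝ), EuclideanSpace.single j (1:ℝ)]) *
      (iteratedFDeriv ℝ 2 ψ q ![EuclideanSpace.single i (1:ℝ), EuclideanSpace.single j (1:ℝ)])
    + ⟪gradient (fun x => lap V x) q, gradient ψ q⟫
    - ⟪gradient V q, fderiv ℝ (gradient V) q (gradient ψ q)⟫

/-- the operator D₂ -/
def D2op {n : ℕ} (V ψ : En n → ℝ) (q : En n) : ℝ :=
  -Real.sqrt 2 * ⟪∫ g, xiPlus V q g • g ∂(gauss n), gradient ψ q⟫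

/-- the operator A appearing in the expansion of the MALA evolution operator -/
def Aop {n : ℕ} (V ψ : En n → ℝ) (q : En n) : ℝ :=
  (gen V (gen V ψ) q + D1op V ψ q + D2op V ψ q) / 2

/-- Metropolized increment -/
def deltaInc {n : ℕ} (V : En n → ℝ) (dt : ℝ) (q g : En n) (u : ℝ) : En n :=
  if u ≤ Rk V dt q (propMove V dt q g) then (-dt) • gradient V q + Real.sqrt (2 * dt) • g
  else 0

/-- expectation over G (std Gaussian) and U (uniform on [0,1]) of the increment -/
def EguDelta {n : ℕ} (V : En n → ℝ) (dt : ℝ) (q : En n) : En n :=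
  ∫ g, (∫ u in Set.Icc (0 : ℝ) 1, deltaInc V dt q g u) ∂(gauss n)


/-- evolution operator of the plain (un-Metropolized) Euler–Maruyama scheme -/
def Pem {n : ℕ} (V : En n → ℝ) (dt : ℝ) (f : En n → ℝ) (q : En n) : ℝ :=
  ∫ q', Tker V dt q q' * f q'

section
open scoped NNReal

section

/-! ### Periodic functions and Taylor remainders -/

variable {E F : Type*} [NormedAddCommGroup E] [NormedSpace ℝ E]
  [NormedAddCommGroup F] [NormedSpace ℝ F]

lemma periodic_of_mem_span {G α : Type*} [AddCommGroup G] {f : G → α} {s : Set G}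
    (hf : ∀ c ∈ s, Function.Periodic f c) {v : G} (hv : v ∈ Submodule.span ℤ s) :
    Function.Periodic f v := by
  induction hv using Submodule.span_induction with
  | mem c hc => exact hf c hc
  | zero => exact fun x => by rw [add_zero]
  | add c d _ _ hc hd => exact hc.add_period hd
  | smul k c _ hc => exact hc.zsmul k

lemma exists_norm_le_of_periodic {ι G : Type*} [Finite ι] [SeminormedAddCommGroup G]
    (b : Module.Basis ι ℝ E) {f : E → G} (hf : Continuous f)
    (hper : ∀ i, Function.Periodic f (b i)) : ∃ B : ℝ, ∀ x, ‖f x‖ ≤ B := by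
  have := Fintype.ofFinite ι
  have := b.finiteDimensional_of_finite
  have := FiniteDimensional.proper_real E
  obtain ⟨B, hB⟩ := (ZSpan.fundamentalDomain_isBounded b).isCompact_closure
    |>.exists_bound_of_continuousOn hf.continuousOn
  refine ⟨B, fun x => ?_⟩
  have hfract : f (ZSpan.fract b x) = f x :=
    (periodic_of_mem_span (Set.forall_mem_range.2 hper) (ZSpan.floor b x).2).sub_eq x
  exact hfract ▸ hB _ (subset_closure (ZSpan.fract_mem_fundamentalDomain b x))

lemma periodic_fderiv {f : E → F} {c : E} (hf : Function.Periodic f c) :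
    Function.Periodic (fderiv ℝ f) c := fun x => by
  rw [← fderiv_comp_add_right, hf.funext]

lemma exists_lipschitzWith_of_periodic {ι : Type*} [Finite ι] (b : Module.Basis ι ℝ E) {f : E → F}
    (hf : ContDiff ℝ 1 f) (hper : ∀ i, Function.Periodic f (b i)) : ∃ K, LipschitzWith K f := by
  obtain ⟨B, hB⟩ := exists_norm_le_of_periodic b (hf.continuous_fderiv one_ne_zero)
    fun i => periodic_fderiv (hper i)
  exact ⟨B.toNNReal, lipschitzWith_of_nnnorm_fderiv_le (hf.differentiable one_ne_zero)
    fun x => NNReal.le_toNNReal_of_coe_le (hB x)⟩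

lemma exists_lipschitzWith_fderiv_of_periodic {ι : Type*} [Finite ι] (b : Module.Basis ι ℝ E)
    {f : E → F} (hf : ContDiff ℝ 3 f) (hper : ∀ i, Function.Periodic f (b i)) :
    (∃ K, LipschitzWith K f) ∧ (∃ K, LipschitzWith K (fderiv ℝ f)) ∧
      ∃ K, LipschitzWith K (fderiv ℝ (fderiv ℝ f)) := by
  have hf₁ : ContDiff ℝ 2 (fderiv ℝ f) := hf.fderiv_right (by norm_num)
  have hf₂ : ContDiff ℝ 1 (fderiv ℝ (fderiv ℝ f)) := hf₁.fderiv_right (by norm_num)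
  have hper₁ (i : ι) : Function.Periodic (fderiv ℝ f) (b i) := periodic_fderiv (hper i)
  exact ⟨exists_lipschitzWith_of_periodic b (hf.of_le (by norm_num)) hper,
    exists_lipschitzWith_of_periodic b (hf₁.of_le (by norm_num)) hper₁,
    exists_lipschitzWith_of_periodic b hf₂ fun i => periodic_fderiv (hper₁ i)⟩

lemma norm_sub_le_of_norm_hasDerivAt_le_pow {f f' : ℝ → F} {C : ℝ} {k : ℕ}
    (hf : ∀ t, HasDerivAt f (f' t) t) (hf' : ∀ t, 0 ≤ t → ‖f' t‖ ≤ C * t ^ k) :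
    ‖f 1 - f 0‖ ≤ C / (k + 1) := by
  have hbound (t : ℝ) : HasDerivAt (fun t : ℝ => C / (k + 1) * t ^ (k + 1)) (C * t ^ k) t := by
    refine ((hasDerivAt_pow (k + 1) t).const_mul (C / (k + 1))).congr_deriv ?_
    simp only [Nat.add_sub_cancel]
    push_cast
    field_simp
  have h := image_norm_le_of_norm_deriv_right_le_deriv_boundary (a := 0) (b := 1)
    (f := fun t => f t - f 0) (fun t _ => ((hf t).sub_const _).continuousAt.continuousWithinAt)
    (fun t _ => ((hf t).sub_const _).hasDerivWithinAt) (by simp) hbound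
    (fun t ht => hf' t ht.1) (Set.right_mem_Icc.2 zero_le_one)
  simpa using h

lemma hasDerivAt_comp_add_smul {f : E → F} (hf : Differentiable ℝ f) (x v : E) (t : ℝ) :
    HasDerivAt (fun t : ℝ => f (x + t • v)) (fderiv ℝ f (x + t • v) v) t := by
  have hline : HasDerivAt (fun t : ℝ => x + t • v) v t := by
    simpa using ((hasDerivAt_id t).smul_const v).const_add x
  exact (hf _).hasFDerivAt.comp_hasDerivAt t hline

lemma norm_sub_sub_fderiv_le_of_lipschitz {f : E → F} {K : ℝ≥0} (hf : Differentiable ℝ f)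
    (hK : LipschitzWith K (fderiv ℝ f)) (x v : E) :
    ‖f (x + v) - f x - fderiv ℝ f x v‖ ≤ K / 2 * ‖v‖ ^ 2 := by
  have hderiv (t : ℝ) : HasDerivAt (fun t : ℝ => f (x + t • v) - t • fderiv ℝ f x v)
      (fderiv ℝ f (x + t • v) v - fderiv ℝ f x v) t := by
    refine ((hasDerivAt_comp_add_smul hf x v t).sub
      ((hasDerivAt_id t).smul_const (fderiv ℝ f x v))).congr_deriv ?_
    rw [one_smul]
  have hderiv_le (t : ℝ) (ht : 0 ≤ t) :
      ‖fderiv ℝ f (x + t • v) v - fderiv ℝ f x v‖ ≤ K * ‖v‖ ^ 2 * t ^ 1 := by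
    calc ‖fderiv ℝ f (x + t • v) v - fderiv ℝ f x v‖
        = ‖(fderiv ℝ f (x + t • v) - fderiv ℝ f x) v‖ := rfl
      _ ≤ ‖fderiv ℝ f (x + t • v) - fderiv ℝ f x‖ * ‖v‖ := ContinuousLinearMap.le_opNorm _ _
      _ ≤ K * ‖x + t • v - x‖ * ‖v‖ := by gcongr; exact hK.norm_sub_le _ _
      _ = K * ‖v‖ ^ 2 * t ^ 1 := by
        rw [add_sub_cancel_left, norm_smul, Real.norm_of_nonneg ht]; ring
  convert norm_sub_le_of_norm_hasDerivAt_le_pow hderiv hderiv_le using 1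
  · congr 1
    simp only [one_smul, zero_smul, add_zero, sub_zero]
    abel
  · push_cast; ring

lemma norm_trapezoid_error_le {f : E → F} {K : ℝ≥0} (hf : ContDiff ℝ 2 f)
    (hK : LipschitzWith K (fderiv ℝ (fderiv ℝ f))) (x v : E) :
    ‖f (x + v) - f x - (1 / 2 : ℝ) • (fderiv ℝ f (x + v) v + fderiv ℝ f x v)‖ ≤
      K / 12 * ‖v‖ ^ 3 := by
  have hf' : Differentiable ℝ (fderiv ℝ f) :=
    (hf.fderiv_right (m := 1) le_rfl).differentiable one_ne_zero
  -- The error over `[x, x + t • v]` has as derivative half a Taylor remainder of `fderiv ℝ f` based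
  -- at the moving end point.
  have hderiv (t : ℝ) : HasDerivAt
      (fun t : ℝ => f (x + t • v) - (t / 2) • (fderiv ℝ f (x + t • v) v + fderiv ℝ f x v))
      ((1 / 2 : ℝ) • (fderiv ℝ f (x + t • v) - fderiv ℝ f x
        - fderiv ℝ (fderiv ℝ f) (x + t • v) (t • v)) v) t := by
    have hfst := hasDerivAt_comp_add_smul (hf.differentiable two_ne_zero) x v t
    have hsnd := (hasDerivAt_comp_add_smul hf' x v t).clm_apply (hasDerivAt_const t v)
    refine (hfst.sub (((hasDerivAt_id t).div_const 2).smul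
      (hsnd.add_const (fderiv ℝ f x v)))).congr_deriv ?_
    simp only [id_eq, map_zero, add_zero, one_div, smul_add, map_smul, sub_apply, smul_apply]
    module
  have hderiv_le (t : ℝ) (ht : 0 ≤ t) :
      ‖(1 / 2 : ℝ) • (fderiv ℝ f (x + t • v) - fderiv ℝ f x
        - fderiv ℝ (fderiv ℝ f) (x + t • v) (t • v)) v‖ ≤ K / 4 * ‖v‖ ^ 3 * t ^ 2 := by
    have htaylor := norm_sub_sub_fderiv_le_of_lipschitz hf' hK (x + t • v) (-(t • v))
    rw [add_neg_cancel_right, map_neg, sub_neg_eq_add, norm_neg, ← norm_neg, neg_add', neg_sub,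
      norm_smul, Real.norm_of_nonneg ht] at htaylor
    calc _ ≤ 1 / 2 * (K / 2 * (t * ‖v‖) ^ 2 * ‖v‖) := by
          rw [norm_smul, Real.norm_of_nonneg (by positivity)]
          gcongr
          exact ContinuousLinearMap.le_of_opNorm_le _ htaylor v
      _ = K / 4 * ‖v‖ ^ 3 * t ^ 2 := by ring
  convert norm_sub_le_of_norm_hasDerivAt_le_pow hderiv hderiv_le using 1
  · congr 1
    simp only [one_smul, zero_smul, add_zero, zero_div, sub_zero]
    abel
  · push_cast; ring

end

/-! ### Metropolized and plain transition operators -/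

lemma abs_iterate_sub_iterate_le {α : Type*} {P Q : (α → ℝ) → α → ℝ} {S : Set (α → ℝ)} {ε : ℝ}
    (hP : Set.MapsTo P S S) (hQ : Set.MapsTo Q S S) (hPQ : ∀ f ∈ S, ∀ x, |P f x - Q f x| ≤ ε)
    (hQ_contract : ∀ f ∈ S, ∀ g ∈ S, ∀ c, (∀ x, |f x - g x| ≤ c) → ∀ x, |Q f x - Q g x| ≤ c)
    {f : α → ℝ} (hf : f ∈ S) (k : ℕ) (x : α) : |P^[k] f x - Q^[k] f x| ≤ k * ε := by
  induction k generalizing x with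
  | zero => simp
  | succ k ih =>
    have hPk : P^[k] f ∈ S := hP.iterate k hf
    have hQk : Q^[k] f ∈ S := hQ.iterate k hf
    rw [Function.iterate_succ_apply', Function.iterate_succ_apply']
    calc |P (P^[k] f) x - Q (Q^[k] f) x|
        ≤ |P (P^[k] f) x - Q (P^[k] f) x| + |Q (P^[k] f) x - Q (Q^[k] f) x| :=
          abs_sub_le _ _ _
      _ ≤ ε + k * ε := add_le_add (hPQ _ hPk x) (hQ_contract _ hPk _ hQk _ ih x)
      _ = (k + 1 : ℕ) * ε := by push_cast; ring

section
variable {α Ω : Type*} [MeasurableSpace α] [MeasurableSpace Ω]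

/-- The measurable functions bounded by one, against which total variation distances are taken. -/
def tvTest (α : Type*) [MeasurableSpace α] : Set (α → ℝ) :=
  {f | Measurable f ∧ ∀ x, |f x| ≤ 1}

/-- The transition operator of the Markov chain that moves from `x` to `p x ω`, where the noise `ω`
has law `γ`. -/
def proposalOp (γ : Measure Ω) (p : α → Ω → α) (f : α → ℝ) (x : α) : ℝ :=
  ∫ ω, f (p x ω) ∂γ

/-- The transition operator of the Metropolized chain, in which the move from `x` to `p x ω` is
accepted with probability `r x ω` and the chain stays at `x` otherwise. -/
def metropolisOp (γ : Measure Ω) (p : α → Ω → α) (r : α → Ω → ℝ) (f : α → ℝ) (x : α) : ℝ :=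
  f x + ∫ ω, r x ω * (f (p x ω) - f x) ∂γ

variable {γ : Measure Ω} [IsProbabilityMeasure γ] {p : α → Ω → α} {r : α → Ω → ℝ}

lemma integrable_of_mem_tvTest {ν : Measure α} [IsFiniteMeasure ν] {f : α → ℝ}
    (hf : f ∈ tvTest α) : Integrable f ν :=
  .of_bound hf.1.aestronglyMeasurable 1 (.of_forall hf.2)

lemma integrable_of_mem_Icc {ν : Measure α} [IsFiniteMeasure ν] {f : α → ℝ} (hf : Measurable f)
    (hf01 : ∀ x, f x ∈ Set.Icc 0 1) : Integrable f ν :=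
  integrable_of_mem_tvTest ⟨hf, fun x => abs_le.2 ⟨by linarith [(hf01 x).1], (hf01 x).2⟩⟩

lemma abs_integral_le_of_abs_le {f : Ω → ℝ} {c : ℝ} (hf : ∀ ω, |f ω| ≤ c) :
    |∫ ω, f ω ∂γ| ≤ c := by
  simpa using norm_integral_le_of_norm_le_const (μ := γ) (.of_forall hf : ∀ᵐ ω ∂γ, ‖f ω‖ ≤ c)

lemma comp_mem_tvTest {β : Type*} [MeasurableSpace β] {f : α → ℝ} (hf : f ∈ tvTest α) {u : β → α}
    (hu : Measurable u) : f ∘ u ∈ tvTest β :=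
  ⟨hf.1.comp hu, fun _ => hf.2 _⟩

lemma integral_mem_tvTest {F : α → Ω → ℝ} (hF : Function.uncurry F ∈ tvTest (α × Ω)) :
    (fun x => ∫ ω, F x ω ∂γ) ∈ tvTest α :=
  ⟨hF.1.stronglyMeasurable.integral_prod_right.measurable,
    fun x => abs_integral_le_of_abs_le fun ω => hF.2 (x, ω)⟩

lemma mapsTo_proposalOp (hp : Measurable (Function.uncurry p)) :
    Set.MapsTo (proposalOp γ p) (tvTest α) (tvTest α) :=
  fun _ hf => integral_mem_tvTest (comp_mem_tvTest hf hp)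

lemma abs_proposalOp_sub_le (hp : Measurable (Function.uncurry p)) {f g : α → ℝ}
    (hf : f ∈ tvTest α) (hg : g ∈ tvTest α) {c : ℝ} (hfg : ∀ x, |f x - g x| ≤ c) (x : α) :
    |proposalOp γ p f x - proposalOp γ p g x| ≤ c := by
  have hpx : Measurable (p x) := hp.of_uncurry_left
  have hsub : proposalOp γ p f x - proposalOp γ p g x = ∫ ω, (f (p x ω) - g (p x ω)) ∂γ :=
    (integral_sub (integrable_of_mem_tvTest (comp_mem_tvTest hf hpx))
      (integrable_of_mem_tvTest (comp_mem_tvTest hg hpx))).symm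
  rw [hsub]
  exact abs_integral_le_of_abs_le fun ω => hfg (p x ω)

section
variable (hp : Measurable (Function.uncurry p)) (hr : Measurable (Function.uncurry r))
  (hr01 : ∀ x ω, r x ω ∈ Set.Icc 0 1)
include hp hr hr01

lemma accept_reject_mem_tvTest {f : α → ℝ} (hf : f ∈ tvTest α) :
    Function.uncurry (fun x ω => r x ω * f (p x ω) + (1 - r x ω) * f x) ∈ tvTest (α × Ω) := by
  refine ⟨?_, fun ⟨x, ω⟩ => ?_⟩
  · exact (hr.mul (hf.1.comp hp)).add
      ((measurable_const.sub hr).mul (hf.1.comp measurable_fst))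
  · exact abs_le.2 (convex_Icc (-1 : ℝ) 1 (abs_le.1 (hf.2 (p x ω))) (abs_le.1 (hf.2 x))
      (hr01 x ω).1 (sub_nonneg.2 (hr01 x ω).2) (add_sub_cancel _ _))

lemma metropolisOp_eq {f : α → ℝ} (hf : f ∈ tvTest α) (x : α) :
    metropolisOp γ p r f x = ∫ ω, (r x ω * f (p x ω) + (1 - r x ω) * f x) ∂γ := by
  have hr_int : Integrable (r x) γ := integrable_of_mem_Icc hr.of_uncurry_left (hr01 x)
  have hrf : Integrable (fun ω => r x ω * f (p x ω)) γ :=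
    hr_int.mul_bdd (hf.1.comp hp.of_uncurry_left).aestronglyMeasurable
      (.of_forall fun ω => hf.2 (p x ω))
  have hsub : Integrable (fun ω => r x ω * (f (p x ω) - f x)) γ := by
    simpa only [mul_sub] using! hrf.sub (hr_int.mul_const (f x))
  calc metropolisOp γ p r f x = ∫ ω, (f x + r x ω * (f (p x ω) - f x)) ∂γ := by
        rw [integral_add (integrable_const _) hsub, integral_const, probReal_univ, one_smul]
        rfl
    _ = ∫ ω, (r x ω * f (p x ω) + (1 - r x ω) * f x) ∂γ :=
        integral_congr_ae (.of_forall fun ω => by ring)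

lemma mapsTo_metropolisOp : Set.MapsTo (metropolisOp γ p r) (tvTest α) (tvTest α) := fun f hf => by
  rw [funext (metropolisOp_eq hp hr hr01 hf)]
  exact integral_mem_tvTest (accept_reject_mem_tvTest hp hr hr01 hf)

lemma abs_metropolisOp_sub_proposalOp_le {f : α → ℝ} (hf : f ∈ tvTest α) (x : α) :
    |metropolisOp γ p r f x - proposalOp γ p f x| ≤ 2 * ∫ ω, (1 - r x ω) ∂γ := by
  have hmix : Integrable (fun ω => r x ω * f (p x ω) + (1 - r x ω) * f x) γ :=
    integrable_of_mem_tvTest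
      (comp_mem_tvTest (accept_reject_mem_tvTest hp hr hr01 hf) measurable_prodMk_left)
  have hprop : Integrable (fun ω => f (p x ω)) γ :=
    integrable_of_mem_tvTest (comp_mem_tvTest hf hp.of_uncurry_left)
  have hrej : Integrable (fun ω => 1 - r x ω) γ :=
    (integrable_const 1).sub (integrable_of_mem_Icc hr.of_uncurry_left (hr01 x))
  rw [metropolisOp_eq hp hr hr01 hf, proposalOp, ← integral_sub hmix hprop, ← integral_const_mul,
    ← Real.norm_eq_abs]
  refine norm_integral_le_of_norm_le (hrej.const_mul 2) (.of_forall fun ω => ?_)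
  have hrej_nonneg : 0 ≤ 1 - r x ω := sub_nonneg.2 (hr01 x ω).2
  calc |r x ω * f (p x ω) + (1 - r x ω) * f x - f (p x ω)|
      = |(f x - f (p x ω)) * (1 - r x ω)| := by ring_nf
    _ = |f x - f (p x ω)| * (1 - r x ω) := by rw [abs_mul, abs_of_nonneg hrej_nonneg]
    _ ≤ (1 + 1) * (1 - r x ω) := by
        gcongr
        exact (abs_sub _ _).trans (add_le_add (hf.2 _) (hf.2 _))
    _ = 2 * (1 - r x ω) := by ring

lemma abs_iterate_metropolisOp_sub_le {ε : ℝ} (hε : ∀ x, ∫ ω, (1 - r x ω) ∂γ ≤ ε) {f : α → ℝ}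
    (hf : f ∈ tvTest α) (k : ℕ) (x : α) :
    |(metropolisOp γ p r)^[k] f x - (proposalOp γ p)^[k] f x| ≤ k * (2 * ε) := by
  refine abs_iterate_sub_iterate_le (mapsTo_metropolisOp hp hr hr01) (mapsTo_proposalOp hp)
    (fun g hg y => ?_) (fun g hg h hh c => abs_proposalOp_sub_le hp hg hh) hf k x
  exact (abs_metropolisOp_sub_proposalOp_le hp hr hr01 hg y).trans (by gcongr; exact hε y)

end
end

/-! ### The Gaussian proposal -/

section
open ProbabilityTheory

variable {n : ℕ}

lemma integral_gauss {F : Type*} [NormedAddCommGroup F] [NormedSpace ℝ F] (f : En n → F) :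
    ∫ g, f g ∂gauss n =
      ∫ g, ((2 * Real.pi) ^ (-(n : ℝ) / 2) * Real.exp (-‖g‖ ^ 2 / 2)) • f g := by
  rw [gauss, integral_withDensity_eq_integral_toReal_smul (by fun_prop)
    (.of_forall fun _ => ENNReal.ofReal_lt_top)]
  refine integral_congr_ae (.of_forall fun g => ?_)
  beta_reduce
  rw [ENNReal.toReal_ofReal (by positivity)]

instance isFiniteMeasure_gauss : IsFiniteMeasure (gauss n) := by
  have hint : Integrable fun g : En n => Real.exp (-(1 / 2) * ‖g‖ ^ 2) :=
    .of_integral_ne_zero <| by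
      rw [GaussianFourier.integral_rexp_neg_mul_sq_norm one_half_pos]
      positivity
  refine isFiniteMeasure_withDensity_ofReal
    (Integrable.const_mul (hint.congr (.of_forall fun g => ?_)) _).2
  beta_reduce
  ring_nf

lemma gauss_eq_stdGaussian : gauss n = stdGaussian (En n) := by
  refine Measure.ext_of_charFun (funext fun t => ?_)
  rw [charFun_stdGaussian, charFun_apply, integral_gauss]
  have hre : 0 < (1 / 2 : ℂ).re := by norm_num
  calc ∫ g : En n, ((2 * Real.pi) ^ (-(n : ℝ) / 2) * Real.exp (-‖g‖ ^ 2 / 2)) •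
        Complex.exp (⟪g, t⟫ * Complex.I)
      = ∫ g : En n, ((2 * Real.pi) ^ (-(n : ℝ) / 2) : ℝ) *
          Complex.exp (-(1 / 2) * ‖g‖ ^ 2 + Complex.I * ⟪t, g⟫) := by
        refine integral_congr_ae (.of_forall fun g => ?_)
        beta_reduce
        rw [real_inner_comm, Complex.exp_add, Complex.real_smul]
        push_cast
        ring_nf
    _ = ((2 * Real.pi) ^ (-(n : ℝ) / 2) * (2 * Real.pi) ^ ((n : ℝ) / 2) : ℝ) *
          Complex.exp (-‖t‖ ^ 2 / 2) := by
        rw [integral_const_mul, GaussianFourier.integral_cexp_neg_mul_sq_norm_add hre,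
          finrank_euclideanSpace_fin, Complex.ofReal_mul,
          Complex.ofReal_cpow (by positivity) (n / 2)]
        push_cast
        rw [Complex.I_sq, mul_assoc]
        ring_nf
    _ = Complex.exp (-‖t‖ ^ 2 / 2) := by
        rw [← Real.rpow_add (by positivity), neg_div, neg_add_cancel, Real.rpow_zero,
          Complex.ofReal_one, one_mul]

instance isGaussian_gauss : IsGaussian (gauss n) := gauss_eq_stdGaussian (n := n) ▸ inferInstance

end

lemma integrable_pow_add_mul_norm {E : Type*} [NormedAddCommGroup E] [MeasurableSpace E]
    {ν : Measure E} [IsFiniteMeasure ν] {k : ℕ} (hν : MemLp id k ν) (a b : ℝ) :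
    Integrable (fun x => (a + b * ‖x‖) ^ k) ν := by
  have hmem : MemLp (fun x : E => a + b * ‖x‖) k ν :=
    (memLp_const a).add (hν.norm.const_mul b)
  refine hmem.integrable_norm_pow'.mono' (hmem.1.pow k) (.of_forall fun x => ?_)
  rw [norm_pow]

section
variable {n : ℕ} (V : En n → ℝ) {dt : ℝ} (hdt : 0 < dt)
include hdt

lemma Tker_propMove (q g : En n) :
    Tker V dt q (propMove V dt q g) =
      (√(2 * dt) ^ n)⁻¹ * ((2 * Real.pi) ^ (-(n : ℝ) / 2) * Real.exp (-‖g‖ ^ 2 / 2)) := by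
  have hscale : (4 * Real.pi * dt) ^ (-(n : ℝ) / 2) =
      (√(2 * dt) ^ n)⁻¹ * (2 * Real.pi) ^ (-(n : ℝ) / 2) := by
    rw [show 4 * Real.pi * dt = 2 * dt * (2 * Real.pi) by ring,
      Real.mul_rpow (by positivity) (by positivity), Real.sqrt_eq_rpow,
      ← Real.rpow_mul_natCast (by positivity), ← Real.rpow_neg (by positivity)]
    ring_nf
  have hincr : propMove V dt q g - q + dt • gradient V q = √(2 * dt) • g := by
    rw [propMove]
    abel
  rw [Tker, hscale, hincr, norm_smul, mul_pow, Real.norm_eq_abs, sq_abs,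
    Real.sq_sqrt (by positivity), mul_assoc]
  congr 3
  field_simp
  ring

lemma integral_Tker_smul {F : Type*} [NormedAddCommGroup F] [NormedSpace ℝ F] (q : En n)
    (f : En n → F) :
    ∫ q', Tker V dt q q' • f q' = ∫ g, f (propMove V dt q g) ∂gauss n := by
  have hs : 0 < √(2 * dt) := by positivity
  set m := q - dt • gradient V q
  calc ∫ q', Tker V dt q q' • f q'
      = ∫ g, Tker V dt q (m + g) • f (m + g) := (integral_add_left_eq_self _ _).symm
    _ = √(2 * dt) ^ n • ∫ g, Tker V dt q (propMove V dt q g) • f (propMove V dt q g) := by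
        have hsubst := Measure.integral_comp_smul_of_nonneg volume
          (fun g => Tker V dt q (m + g) • f (m + g)) √(2 * dt) (hR := hs.le)
        rw [finrank_euclideanSpace_fin] at hsubst
        rw [← smul_inv_smul₀ (pow_ne_zero n hs.ne') (∫ g, Tker V dt q (m + g) • f (m + g)),
          ← hsubst]
        rfl
    _ = ∫ g, f (propMove V dt q g) ∂gauss n := by
        rw [integral_gauss, ← integral_smul]
        simp only [Tker_propMove V hdt, smul_smul]
        congr! 3
        field_simp

lemma Pem_eq_proposalOp : Pem V dt = proposalOp (gauss n) (propMove V dt) :=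
  funext fun f => funext fun q => integral_Tker_smul V hdt q f

lemma Pmala_eq_metropolisOp :
    Pmala V dt =
      metropolisOp (gauss n) (propMove V dt) fun q g => Rk V dt q (propMove V dt q g) := by
  funext f q
  rw [Pmala, metropolisOp, ← integral_Tker_smul V hdt q fun q' => Rk V dt q q' * (f q' - f q)]
  simp only [smul_eq_mul, mul_left_comm, mul_assoc]

end

/-! ### The acceptance probability -/

lemma norm_add_smul_sq {E : Type*} [NormedAddCommGroup E] [InnerProductSpace ℝ E] (x a : E)
    (t : ℝ) : ‖x + t • a‖ ^ 2 = ‖x‖ ^ 2 + 2 * t * ⟪a, x⟫ + t ^ 2 * ‖a‖ ^ 2 := by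
  rw [norm_add_sq_real, real_inner_smul_right, real_inner_comm, norm_smul, mul_pow,
    Real.norm_eq_abs, sq_abs]
  ring

lemma abs_sq_sub_sq_le_of_abs_le {a b B : ℝ} (ha : |a| ≤ B) (hb : |b| ≤ B) :
    |a ^ 2 - b ^ 2| ≤ 2 * B * |a - b| := by
  rw [sq_sub_sq, abs_mul]
  gcongr
  linarith [abs_add_le a b]

lemma one_sub_min_one_exp_neg_le (a : ℝ) : 1 - min 1 (Real.exp (-a)) ≤ |a| := by
  have hexp : 1 - |a| ≤ Real.exp (-a) := by linarith [Real.add_one_le_exp (-a), le_abs_self a]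
  linarith [le_min (sub_le_self 1 (abs_nonneg a)) hexp]

section
variable {E : Type*} [NormedAddCommGroup E] [InnerProductSpace ℝ E] [CompleteSpace E]

lemma norm_gradient (f : E → ℝ) (x : E) : ‖gradient f x‖ = ‖fderiv ℝ f x‖ := by
  simp [gradient]

lemma continuous_gradient {f : E → ℝ} (hf : ContDiff ℝ 1 f) : Continuous (gradient f) :=
  (InnerProductSpace.toDual ℝ E).symm.continuous.comp (hf.continuous_fderiv one_ne_zero)

/-- The negative logarithm of the Metropolis ratio of an Euler–Maruyama move from `q` to `q'`,
written as the error of the trapezoidal rule for the line integral of `∇V` along the move plus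
`dt / 4` times the increment of `|∇V|²`. -/
def metropolisExponent (V : E → ℝ) (dt : ℝ) (q q' : E) : ℝ :=
  V q' - V q - (⟪gradient V q', q' - q⟫ + ⟪gradient V q, q' - q⟫) / 2 +
    dt / 4 * (‖gradient V q'‖ ^ 2 - ‖gradient V q‖ ^ 2)

variable {V : E → ℝ} {dt : ℝ} {K₀ K₁ K₂ : ℝ≥0}

lemma norm_gradient_le_of_lipschitz (hK₀ : LipschitzWith K₀ V) (x : E) : ‖gradient V x‖ ≤ K₀ :=
  norm_gradient V x ▸ norm_fderiv_le_of_lipschitz ℝ hK₀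

lemma abs_norm_gradient_sq_sub_le (hK₀ : LipschitzWith K₀ V) (hK₁ : LipschitzWith K₁ (fderiv ℝ V))
    (q q' : E) :
    |‖gradient V q'‖ ^ 2 - ‖gradient V q‖ ^ 2| ≤ 2 * (K₀ * K₁ * ‖q' - q‖) := by
  have hincr : |‖gradient V q'‖ - ‖gradient V q‖| ≤ K₁ * ‖q' - q‖ := by
    rw [norm_gradient, norm_gradient]
    exact (abs_norm_sub_norm_le _ _).trans (hK₁.norm_sub_le _ _)
  calc |‖gradient V q'‖ ^ 2 - ‖gradient V q‖ ^ 2|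
      ≤ 2 * K₀ * |‖gradient V q'‖ - ‖gradient V q‖| :=
        abs_sq_sub_sq_le_of_abs_le (by simpa using norm_gradient_le_of_lipschitz hK₀ q')
          (by simpa using norm_gradient_le_of_lipschitz hK₀ q)
    _ ≤ 2 * K₀ * (K₁ * ‖q' - q‖) := by gcongr
    _ = 2 * (K₀ * K₁ * ‖q' - q‖) := by ring

lemma abs_metropolisExponent_le (hdt : 0 ≤ dt) (hV : ContDiff ℝ 2 V) (hK₀ : LipschitzWith K₀ V)
    (hK₁ : LipschitzWith K₁ (fderiv ℝ V)) (hK₂ : LipschitzWith K₂ (fderiv ℝ (fderiv ℝ V)))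
    (q q' : E) :
    |metropolisExponent V dt q q'| ≤
      K₂ / 12 * ‖q' - q‖ ^ 3 + dt / 2 * (K₀ * K₁ * ‖q' - q‖) := by
  have htrap : |V q' - V q - (⟪gradient V q', q' - q⟫ + ⟪gradient V q, q' - q⟫) / 2| ≤
      K₂ / 12 * ‖q' - q‖ ^ 3 := by
    have h := norm_trapezoid_error_le hV hK₂ q (q' - q)
    rwa [add_sub_cancel, smul_eq_mul, one_div_mul_eq_div, ← inner_gradient_left,
      ← inner_gradient_left] at h
  have hsq : |dt / 4 * (‖gradient V q'‖ ^ 2 - ‖gradient V q‖ ^ 2)| ≤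
      dt / 2 * (K₀ * K₁ * ‖q' - q‖) := by
    rw [abs_mul, abs_of_nonneg (by positivity)]
    calc dt / 4 * |‖gradient V q'‖ ^ 2 - ‖gradient V q‖ ^ 2|
        ≤ dt / 4 * (2 * (K₀ * K₁ * ‖q' - q‖)) := by
          gcongr
          exact abs_norm_gradient_sq_sub_le hK₀ hK₁ q q'
      _ = dt / 2 * (K₀ * K₁ * ‖q' - q‖) := by ring
  exact (abs_add_le _ _).trans (add_le_add htrap hsq)

end

section
variable {n : ℕ} {V : En n → ℝ} {dt : ℝ} {K₀ K₁ K₂ : ℝ≥0}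

lemma Rk_eq_min_one_exp (V : En n → ℝ) (hdt : 0 < dt) (q q' : En n) :
    Rk V dt q q' = min 1 (Real.exp (-metropolisExponent V dt q q')) := by
  have hc : (4 * Real.pi * dt) ^ (-(n : ℝ) / 2) ≠ 0 := by positivity
  rw [Rk, Tker, Tker, mul_left_comm, mul_left_comm (Real.exp (-V q)), mul_div_mul_left _ _ hc,
    ← Real.exp_add, ← Real.exp_add, ← Real.exp_sub, norm_add_smul_sq, norm_add_smul_sq,
    norm_sub_rev q q', ← neg_sub q' q, inner_neg_right, metropolisExponent]
  congr 2
  field_simp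
  ring

lemma Rk_mem_Icc (V : En n → ℝ) (hdt : 0 < dt) (q q' : En n) : Rk V dt q q' ∈ Set.Icc 0 1 := by
  rw [Rk_eq_min_one_exp V hdt]
  exact ⟨le_min zero_le_one (Real.exp_nonneg _), min_le_left _ _⟩

lemma measurable_propMove (hV : ContDiff ℝ 1 V) (dt : ℝ) :
    Measurable (Function.uncurry (propMove V dt)) := by
  have := continuous_gradient hV
  unfold propMove Function.uncurry
  fun_prop

lemma measurable_Tker (hV : ContDiff ℝ 1 V) (dt : ℝ) :
    Measurable (Function.uncurry (Tker V dt)) := by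
  have := continuous_gradient hV
  unfold Tker Function.uncurry
  fun_prop

lemma measurable_Rk (hV : ContDiff ℝ 1 V) (dt : ℝ) :
    Measurable (Function.uncurry (Rk V dt)) := by
  have hforward := measurable_Tker hV dt
  have hbackward := hforward.comp measurable_swap
  have hexp : Measurable fun q => Real.exp (-V q) := hV.continuous.measurable.neg.exp
  exact measurable_const.min (((hexp.comp measurable_snd).mul hbackward).div
    ((hexp.comp measurable_fst).mul hforward))

lemma measurable_Rk_propMove (hV : ContDiff ℝ 1 V) (dt : ℝ) :
    Measurable (Function.uncurry fun q g => Rk V dt q (propMove V dt q g)) :=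
  (measurable_Rk hV dt).comp (measurable_fst.prodMk (measurable_propMove hV dt))

lemma norm_propMove_sub_le (hdt : 0 ≤ dt) (hdt' : dt ≤ 1) (hK₀ : LipschitzWith K₀ V) (q g : En n) :
    ‖propMove V dt q g - q‖ ≤ √dt * (K₀ + √2 * ‖g‖) := by
  have hdt_le : dt ≤ √dt := Real.le_sqrt_of_sq_le (pow_le_of_le_one hdt hdt' two_ne_zero)
  calc ‖propMove V dt q g - q‖ = ‖√(2 * dt) • g - dt • gradient V q‖ := by
        rw [propMove]
        congr 1
        abel
    _ ≤ √(2 * dt) * ‖g‖ + dt * ‖gradient V q‖ := by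
        refine (norm_sub_le _ _).trans_eq ?_
        rw [norm_smul, norm_smul, Real.norm_of_nonneg hdt, Real.norm_of_nonneg (Real.sqrt_nonneg _)]
    _ ≤ √(2 * dt) * ‖g‖ + √dt * K₀ := by
        gcongr
        exact norm_gradient_le_of_lipschitz hK₀ q
    _ = √dt * (K₀ + √2 * ‖g‖) := by
        rw [Real.sqrt_mul zero_le_two]
        ring

section
variable (hV : ContDiff ℝ 2 V) (hK₀ : LipschitzWith K₀ V) (hK₁ : LipschitzWith K₁ (fderiv ℝ V))
  (hK₂ : LipschitzWith K₂ (fderiv ℝ (fderiv ℝ V)))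
include hV hK₀ hK₁ hK₂

lemma one_sub_Rk_propMove_le (hdt : 0 < dt) (hdt' : dt ≤ 1) (q g : En n) :
    1 - Rk V dt q (propMove V dt q g) ≤ dt * √dt *
      (K₂ / 12 * (K₀ + √2 * ‖g‖) ^ 3 + K₀ * K₁ / 2 * (K₀ + √2 * ‖g‖) ^ 1) := by
  have hincr := norm_propMove_sub_le hdt.le hdt' hK₀ q g
  set q' := propMove V dt q g
  set w := K₀ + √2 * ‖g‖
  calc 1 - Rk V dt q q' ≤ |metropolisExponent V dt q q'| :=
        Rk_eq_min_one_exp V hdt q q' ▸ one_sub_min_one_exp_neg_le _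
    _ ≤ K₂ / 12 * ‖q' - q‖ ^ 3 + dt / 2 * (K₀ * K₁ * ‖q' - q‖) :=
        abs_metropolisExponent_le hdt.le hV hK₀ hK₁ hK₂ q q'
    _ ≤ K₂ / 12 * (√dt * w) ^ 3 + dt / 2 * (K₀ * K₁ * (√dt * w)) := by gcongr
    _ = √dt ^ 2 * √dt * (K₂ / 12 * w ^ 3) + dt * √dt * (K₀ * K₁ / 2 * w ^ 1) := by ring
    _ = dt * √dt * (K₂ / 12 * w ^ 3 + K₀ * K₁ / 2 * w ^ 1) := by
        rw [Real.sq_sqrt hdt.le, ← mul_add]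

lemma exists_forall_integral_one_sub_Rk_le :
    ∃ C ≥ (0 : ℝ), ∀ dt, 0 < dt → dt ≤ 1 → ∀ q,
      ∫ g, (1 - Rk V dt q (propMove V dt q g)) ∂gauss n ≤ dt * √dt * C := by
  have hmoment (k : ℕ) : Integrable (fun g : En n => (K₀ + √2 * ‖g‖) ^ k) (gauss n) :=
    integrable_pow_add_mul_norm
      (ProbabilityTheory.IsGaussian.memLp_id _ _ (ENNReal.natCast_ne_top k)) _ _
  have hint : Integrable (fun g : En n =>
      K₂ / 12 * (K₀ + √2 * ‖g‖) ^ 3 + K₀ * K₁ / 2 * (K₀ + √2 * ‖g‖) ^ 1) (gauss n) :=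
    ((hmoment 3).const_mul _).add ((hmoment 1).const_mul _)
  refine ⟨∫ g, (K₂ / 12 * (K₀ + √2 * ‖g‖) ^ 3 + K₀ * K₁ / 2 * (K₀ + √2 * ‖g‖) ^ 1) ∂gauss n,
    by positivity, fun dt hdt hdt' q => ?_⟩
  rw [← integral_const_mul]
  exact integral_mono_of_nonneg (.of_forall fun g => sub_nonneg.2 (Rk_mem_Icc V hdt _ _).2)
    (hint.const_mul _) (.of_forall fun g => one_sub_Rk_propMove_le hV hK₀ hK₁ hK₂ hdt hdt' q g)

end
end

theorem stmt18_general (n : ℕ) (V : En n → ℝ) (K₀ K₁ K₂ : ℝ≥0) (hV : ContDiff ℝ 2 V)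
    (hK₀ : LipschitzWith K₀ V) (hK₁ : LipschitzWith K₁ (fderiv ℝ V))
    (hK₂ : LipschitzWith K₂ (fderiv ℝ (fderiv ℝ V))) :
    ∃ C ≥ (0 : ℝ), ∃ dts > (0 : ℝ), ∀ dt : ℝ, 0 < dt → dt ≤ dts → ∀ q : En n,
      ∀ φ : En n → ℝ, Measurable φ → (∀ x : En n, |φ x| ≤ 1) →
        |(Pmala V dt)^[⌊1 / dt⌋₊] φ q - (Pem V dt)^[⌊1 / dt⌋₊] φ q| ≤ C * √dt := by
  obtain ⟨C, hC, hrej⟩ := exists_forall_integral_one_sub_Rk_le hV hK₀ hK₁ hK₂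
  refine ⟨2 * C, by positivity, 1, one_pos, fun dt hdt hdt' q φ hφ hφ_le => ?_⟩
  have hV₁ : ContDiff ℝ 1 V := hV.of_le one_le_two
  rw [Pmala_eq_metropolisOp V hdt, Pem_eq_proposalOp V hdt]
  calc _ ≤ ⌊1 / dt⌋₊ * (2 * (dt * √dt * C)) :=
        abs_iterate_metropolisOp_sub_le (measurable_propMove hV₁ dt)
          (measurable_Rk_propMove hV₁ dt) (fun _ _ => Rk_mem_Icc V hdt _ _) (hrej dt hdt hdt')
          ⟨hφ, hφ_le⟩ _ q
    _ ≤ 1 / dt * (2 * (dt * √dt * C)) := by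
        gcongr
        exact Nat.floor_le (by positivity)
    _ = 2 * C * √dt := by field_simp

lemma exists_lipschitzWith_fderiv_of_periodic_single {n : ℕ} {F : Type*} [NormedAddCommGroup F]
    [NormedSpace ℝ F] {f : En n → F} (hf : ContDiff ℝ 3 f) {L : ℝ} (hL : L ≠ 0)
    (hper : ∀ i, Function.Periodic f (L • EuclideanSpace.single i (1 : ℝ))) :
    (∃ K, LipschitzWith K f) ∧ (∃ K, LipschitzWith K (fderiv ℝ f)) ∧
      ∃ K, LipschitzWith K (fderiv ℝ (fderiv ℝ f)) := by
  refine exists_lipschitzWith_fderiv_of_periodic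
    ((EuclideanSpace.basisFun (Fin n) ℝ).toBasis.isUnitSMul fun _ => hL.isUnit) hf fun i => ?_
  simpa [Module.Basis.isUnitSMul_apply] using hper i

end

theorem stmt18 (n : ℕ) (hn : 1 ≤ n) (L : ℝ) (hL : 0 < L)
    (V : En n → ℝ) (hV : ContDiff ℝ (⊤ : ℕ∞) V)
    (hper : ∀ (q : En n) (i : Fin n), V (q + L • EuclideanSpace.single i (1 : ℝ)) = V q) :
    ∃ C ≥ (0 : ℝ), ∃ dts > (0 : ℝ), ∀ dt : ℝ, 0 < dt → dt ≤ dts → ∀ q : En n,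
      ∀ φ : En n → ℝ, Measurable φ →
        (∀ (x : En n) (i : Fin n), φ (x + L • EuclideanSpace.single i (1 : ℝ)) = φ x) →
        (∀ x : En n, |φ x| ≤ 1) →
        |(Pmala V dt)^[⌊1 / dt⌋₊] φ q - (Pem V dt)^[⌊1 / dt⌋₊] φ q| ≤
          C * Real.sqrt dt := by
  obtain ⟨⟨K₀, hK₀⟩, ⟨K₁, hK₁⟩, ⟨K₂, hK₂⟩⟩ := exists_lipschitzWith_fderiv_of_periodic_single
    (contDiff_infty.1 hV 3) hL.ne' fun i q => hper q i
  obtain ⟨C, hC, dts, hdts, hbound⟩ :=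
    stmt18_general n V K₀ K₁ K₂ (contDiff_infty.1 hV 2) hK₀ hK₁ hK₂
  exact ⟨C, hC, dts, hdts, fun dt hdt hdt' q φ hφ _ => hbound dt hdt hdt' q φ hφ⟩
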